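/- If 2δ > σ² (no log-moment condition assumed), then ∫_0^∞ χ(λ) dλ < ∞, where χ(λ) := exp{ −∫_1^λ φ(z)/ω(z) dz } for λ ≥ 1 and χ(λ) := exp{ ∫_λ^1 φ(z)/ω(z) dz } for 0 < λ < 1. -/

import Mathlib

open MeasureTheory Set

open Filter Topology Asymptotics

/-!
Writing `χ = exp (-G)` with `G' = φ / ω`, the size of `χ` at both ends of the half-line is read off
the logarithmic slope `z * (φ z / ω z) = φ z / (c + σ ^ 2 * z / 2)`. At `0` it tends to
`φ 0 / c = 0`, because `φ` is continuous on `[0, ∞)` by dominated convergence, so `χ` is dominated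
by every `x ^ (-b)` with `b > 0`. At infinity `φ z ≥ δ * z` bounds it below by any
`a < 2 * δ / σ ^ 2`, so `χ` is dominated by `x ^ (-a)`, and `2 * δ > σ ^ 2` leaves room for some
`a > 1`.
-/

section ExpNeg

variable {G G' : ℝ → ℝ} {a b : ℝ}

theorem monotoneOn_sub_const_mul_log {M : ℝ} (hM : 0 < M)
    (hG : ∀ x ∈ Ici M, HasDerivAt G (G' x) x) (ha : ∀ x ∈ Ici M, a ≤ x * G' x) :
    MonotoneOn (fun x => G x - a * Real.log x) (Ici M) := by
  have hderiv : ∀ x ∈ Ici M,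
      HasDerivAt (fun y => G y - a * Real.log y) (G' x - a * x⁻¹) x := fun x hx =>
    (hG x hx).sub ((Real.hasDerivAt_log (hM.trans_le hx).ne').const_mul a)
  refine monotoneOn_of_hasDerivWithinAt_nonneg (convex_Ici M)
    (fun x hx => (hderiv x hx).continuousAt.continuousWithinAt)
    (fun x hx => (hderiv x (interior_subset hx)).hasDerivWithinAt) fun x hx => ?_
  have hxM : x ∈ Ici M := interior_subset hx
  rw [sub_nonneg, ← div_eq_mul_inv, div_le_iff₀' (hM.trans_le hxM)]
  exact ha x hxM

theorem isBigO_exp_neg_rpow_atTop (hG : ∀ᶠ x in atTop, HasDerivAt G (G' x) x)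
    (ha : ∀ᶠ x in atTop, a ≤ x * G' x) :
    (fun x => Real.exp (-G x)) =O[atTop] fun x => x ^ (-a) := by
  obtain ⟨M, hM, hMG⟩ := (atTop_basis' 1).eventually_iff.1 (hG.and ha)
  have hM0 : 0 < M := one_pos.trans_le hM
  have hmono := monotoneOn_sub_const_mul_log hM0 (fun x hx => (hMG hx).1) fun x hx => (hMG hx).2
  refine IsBigO.of_bound (Real.exp (-(G M - a * Real.log M))) ?_
  filter_upwards [eventually_ge_atTop M] with x hx
  have hx0 : 0 < x := hM0.trans_le hx
  have hle : G M - a * Real.log M ≤ G x - a * Real.log x := hmono self_mem_Ici hx hx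
  rw [Real.norm_of_nonneg (Real.exp_pos _).le, Real.norm_of_nonneg (Real.rpow_nonneg hx0.le _),
    Real.rpow_def_of_pos hx0, ← Real.exp_add, Real.exp_le_exp]
  linarith

-- The substitution `x ↦ x⁻¹` negates the logarithmic slope and exchanges `0` and infinity.
theorem isBigO_exp_neg_rpow_nhdsGT_zero (hG : ∀ᶠ x in 𝓝[>] 0, HasDerivAt G (G' x) x)
    (hb : ∀ᶠ x in 𝓝[>] 0, x * G' x ≤ b) :
    (fun x => Real.exp (-G x)) =O[𝓝[>] 0] fun x => x ^ (-b) := by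
  have hderiv : ∀ᶠ y in atTop, HasDerivAt (fun y => G y⁻¹) (G' y⁻¹ * -(y ^ 2)⁻¹) y := by
    filter_upwards [tendsto_inv_atTop_nhdsGT_zero.eventually hG, eventually_ne_atTop 0]
      with y hy hy0
    exact hy.comp y (hasDerivAt_inv hy0)
  have hslope : ∀ᶠ y in atTop, -b ≤ y * (G' y⁻¹ * -(y ^ 2)⁻¹) := by
    filter_upwards [tendsto_inv_atTop_nhdsGT_zero.eventually hb, eventually_ne_atTop 0]
      with y hy hy0
    calc -b ≤ -(y⁻¹ * G' y⁻¹) := neg_le_neg hy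
      _ = y * (G' y⁻¹ * -(y ^ 2)⁻¹) := by field_simp
  refine ((isBigO_exp_neg_rpow_atTop hderiv hslope).comp_tendsto
    tendsto_inv_nhdsGT_zero).congr' (.of_forall fun x => ?_) ?_
  · simp only [Function.comp_apply, inv_inv]
  · filter_upwards [self_mem_nhdsWithin] with x (hx : 0 < x)
    rw [Function.comp_apply, Real.inv_rpow hx.le, neg_neg, Real.rpow_neg hx.le]

theorem integrableOn_Ioi_exp_neg (hG : ∀ x ∈ Ioi 0, HasDerivAt G (G' x) x)
    (hb : b < 1) (h_zero : ∀ᶠ x in 𝓝[>] 0, x * G' x ≤ b)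
    (ha : 1 < a) (h_top : ∀ᶠ x in atTop, a ≤ x * G' x) :
    IntegrableOn (fun x => Real.exp (-G x)) (Ioi 0) := by
  have hcont : ContinuousOn (fun x => Real.exp (-G x)) (Ioi 0) := fun x hx =>
    (hG x hx).continuousAt.neg.rexp.continuousWithinAt
  have hO_top := isBigO_exp_neg_rpow_atTop ((eventually_gt_atTop 0).mono hG) h_top
  have hO_zero := isBigO_exp_neg_rpow_nhdsGT_zero (eventually_mem_nhdsWithin.mono hG) h_zero
  simpa only [sub_self, Real.rpow_zero, one_mul] using mellin_convergent_of_isBigO_scalar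
    (hcont.locallyIntegrableOn measurableSet_Ioi) hO_top ha hO_zero hb

theorem hasDerivAt_integral_of_continuousOn_Ioi {E : Type*} [NormedAddCommGroup E]
    [NormedSpace ℝ E] [CompleteSpace E] {f : ℝ → E} {l r x : ℝ} (hf : ContinuousOn f (Ioi l))
    (hr : l < r) (hx : l < x) : HasDerivAt (fun y => ∫ z in r..y, f z) (f x) x :=
  intervalIntegral.integral_hasDerivAt_right
    ((hf.mono fun _ hy => (lt_min hr hx).trans_le hy.1).intervalIntegrable)
    (hf.stronglyMeasurableAtFilter isOpen_Ioi x hx) (hf.continuousAt (Ioi_mem_nhds hx))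

end ExpNeg

section LaplaceExponent

/-- The Laplace exponent of a subordinator with drift `δ` and Lévy measure `μ`. Only the
restriction of `μ` to `(0, ∞)` matters. -/
noncomputable def laplaceExponent (δ : ℝ) (μ : Measure ℝ) (z : ℝ) : ℝ :=
  δ * z + ∫ u in Ioi (0 : ℝ), (1 - Real.exp (-(z * u))) ∂μ

variable {δ : ℝ} {μ : Measure ℝ} {z : ℝ}

theorem laplaceExponent_zero : laplaceExponent δ μ 0 = 0 := by
  simp [laplaceExponent]

theorem one_sub_exp_neg_nonneg {x : ℝ} (hx : 0 ≤ x) : 0 ≤ 1 - Real.exp (-x) :=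
  sub_nonneg.2 (Real.exp_le_one_iff.2 (neg_nonpos.2 hx))

theorem one_sub_exp_neg_mul_le {M u : ℝ} (hM : 1 ≤ M) (hzM : z ≤ M) (hu : 0 ≤ u) :
    1 - Real.exp (-(z * u)) ≤ M * min 1 u := by
  rw [mul_min_of_nonneg _ _ (zero_le_one.trans hM), mul_one]
  refine le_min ((sub_le_self _ (Real.exp_pos _).le).trans hM) ?_
  calc 1 - Real.exp (-(z * u)) ≤ z * u := sub_le_comm.1 (Real.one_sub_le_exp_neg _)
    _ ≤ M * u := by gcongr

theorem mul_le_laplaceExponent (hz : 0 ≤ z) : δ * z ≤ laplaceExponent δ μ z :=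
  le_add_of_nonneg_right <| setIntegral_nonneg measurableSet_Ioi fun _ hu =>
    one_sub_exp_neg_nonneg (mul_nonneg hz (le_of_lt hu))

theorem integrableOn_min_one_of_lintegral_lt_top
    (hμ : ∫⁻ u in Ioi (0 : ℝ), ENNReal.ofReal (min 1 u) ∂μ < ⊤) :
    IntegrableOn (fun u => min 1 u) (Ioi 0) μ := by
  refine (lintegral_ofReal_ne_top_iff_integrable (by fun_prop) ?_).1 hμ.ne
  filter_upwards [ae_restrict_mem measurableSet_Ioi] with u (hu : 0 < u)
  exact le_min zero_le_one hu.le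

theorem continuousOn_laplaceExponent (hμ : IntegrableOn (fun u => min 1 u) (Ioi 0) μ) :
    ContinuousOn (laplaceExponent δ μ) (Ici 0) := by
  refine (continuous_const_mul δ).continuousOn.add fun z hz => ?_
  refine continuousWithinAt_of_dominated (bound := fun u => (z + 1) * min 1 u)
    (.of_forall fun y => by fun_prop) ?_ (hμ.const_mul (z + 1)) (.of_forall fun u => by fun_prop)
  filter_upwards [self_mem_nhdsWithin, mem_nhdsWithin_of_mem_nhds (Iic_mem_nhds (lt_add_one z))]
    with y (hy : 0 ≤ y) hyz
  filter_upwards [ae_restrict_mem measurableSet_Ioi] with u (hu : 0 < u)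
  rw [Real.norm_of_nonneg (one_sub_exp_neg_nonneg (mul_nonneg hy hu.le))]
  exact one_sub_exp_neg_mul_le (le_add_of_nonneg_left hz) hyz hu.le

theorem tendsto_laplaceExponent_nhdsGT_zero
    (hμ : IntegrableOn (fun u => min 1 u) (Ioi 0) μ) :
    Tendsto (laplaceExponent δ μ) (𝓝[>] 0) (𝓝 0) := by
  simpa only [laplaceExponent_zero] using
    (continuousOn_laplaceExponent hμ 0 self_mem_Ici).mono_left
      (nhdsWithin_mono 0 Ioi_subset_Ici_self)

end LaplaceExponent

section LogarithmicSlope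

variable {φ : ℝ → ℝ} {c s : ℝ}

theorem mul_div_quadratic {z : ℝ} (hz : z ≠ 0) (w : ℝ) :
    z * (w / (c * z + s * z ^ 2 / 2)) = w / (c + s * z / 2) := by
  rw [show c * z + s * z ^ 2 / 2 = z * (c + s * z / 2) by ring, ← mul_div_assoc,
    mul_div_mul_left _ _ hz]

theorem tendsto_mul_div_quadratic_nhdsGT_zero (hc : c ≠ 0) {l : ℝ}
    (hφ : Tendsto φ (𝓝[>] 0) (𝓝 l)) :
    Tendsto (fun z => z * (φ z / (c * z + s * z ^ 2 / 2))) (𝓝[>] 0) (𝓝 (l / c)) := by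
  have hden : Tendsto (fun z => c + s * z / 2) (𝓝[>] 0) (𝓝 c) := by
    have : Continuous fun z => c + s * z / 2 := by fun_prop
    simpa using (this.tendsto 0).mono_left nhdsWithin_le_nhds
  refine (hφ.div hden hc).congr' ?_
  filter_upwards [self_mem_nhdsWithin] with z (hz : 0 < z)
  exact (mul_div_quadratic hz.ne' _).symm

theorem eventually_le_mul_div_quadratic_atTop {a δ : ℝ} (hs : 0 < s) (ha : a < 2 * δ / s)
    (hφ : ∀ᶠ z in atTop, δ * z ≤ φ z) :
    ∀ᶠ z in atTop, a ≤ z * (φ z / (c * z + s * z ^ 2 / 2)) := by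
  have hslope : 0 < δ - a * s / 2 := by linarith [(lt_div_iff₀ hs).1 ha]
  have hden : Tendsto (fun z => c + s / 2 * z) atTop atTop :=
    tendsto_atTop_add_const_left _ _ (tendsto_id.const_mul_atTop (half_pos hs))
  have hgap : Tendsto (fun z => (δ - a * s / 2) * z) atTop atTop :=
    tendsto_id.const_mul_atTop hslope
  filter_upwards [hφ, hden.eventually_gt_atTop 0, hgap.eventually_ge_atTop (a * c),
    eventually_ne_atTop 0] with z hφz hden_pos hgap_le hz
  rw [mul_div_quadratic hz, le_div_iff₀ (by linarith)]
  linarith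

theorem integrableOn_Ioi_exp_neg_integral_div_quadratic {l r δ : ℝ} (hc : 0 < c) (hs : 0 < s)
    (hr : 0 < r) (hφ : ContinuousOn φ (Ioi 0)) (h_zero : Tendsto φ (𝓝[>] 0) (𝓝 l)) (hl : l < c)
    (h_top : ∀ᶠ z in atTop, δ * z ≤ φ z) (hδ : s < 2 * δ) :
    IntegrableOn (fun x => Real.exp (-(∫ z in r..x, φ z / (c * z + s * z ^ 2 / 2)))) (Ioi 0) := by
  have hcont : ContinuousOn (fun z => φ z / (c * z + s * z ^ 2 / 2)) (Ioi 0) :=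
    hφ.div (by fun_prop) fun z (hz : 0 < z) => by positivity
  obtain ⟨b, hlb, hb⟩ := exists_between ((div_lt_one hc).2 hl)
  obtain ⟨a, ha, haδ⟩ := exists_between ((one_lt_div hs).2 hδ)
  exact integrableOn_Ioi_exp_neg
    (fun x hx => hasDerivAt_integral_of_continuousOn_Ioi hcont hr hx)
    hb ((tendsto_mul_div_quadratic_nhdsGT_zero hc.ne' h_zero).eventually_le_const hlb)
    ha (eventually_le_mul_div_quadratic_atTop hs haδ h_top)

end LogarithmicSlope

/-- If 2δ > σ² (no log-moment condition assumed), then ∫_0^∞ χ(λ) dλ < ∞, where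
χ(λ) = exp{−∫_1^λ φ/ω} for λ ≥ 1 and χ(λ) = exp{∫_λ^1 φ/ω} for 0 < λ < 1. -/
theorem stmt_12
    (μ : Measure ℝ) (δ c σ : ℝ)
    (hμ0 : μ (Iic 0) = 0)
    (hμint : ∫⁻ u in Ioi (0:ℝ), ENNReal.ofReal (min 1 u) ∂μ < ⊤)
    (hδ : 0 ≤ δ) (hc : 0 < c) (hσ : 0 < σ)
    (h2δ : σ ^ 2 < 2 * δ)
    (φ ω χ : ℝ → ℝ)
    (hφ : ∀ z, φ z = δ * z + ∫ u in Ioi (0:ℝ), (1 - Real.exp (-(z * u))) ∂μ)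
    (hω : ∀ z, ω z = c * z + σ ^ 2 * z ^ 2 / 2)
    (hχ1 : ∀ lam, 1 ≤ lam → χ lam = Real.exp (-(∫ z in (1:ℝ)..lam, φ z / ω z)))
    (hχ2 : ∀ lam, 0 < lam → lam < 1 → χ lam = Real.exp (∫ z in lam..(1:ℝ), φ z / ω z)) :
    IntegrableOn χ (Ioi 0) volume := by
  obtain rfl : φ = laplaceExponent δ μ := funext hφ
  obtain rfl : ω = fun z => c * z + σ ^ 2 * z ^ 2 / 2 := funext hω
  have hmin := integrableOn_min_one_of_lintegral_lt_top hμint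
  have hint := integrableOn_Ioi_exp_neg_integral_div_quadratic hc (sq_pos_of_pos hσ) one_pos
    ((continuousOn_laplaceExponent hmin).mono Ioi_subset_Ici_self)
    (tendsto_laplaceExponent_nhdsGT_zero hmin) hc
    ((eventually_ge_atTop 0).mono fun z => mul_le_laplaceExponent) h2δ
  refine hint.congr_fun (fun x (hx : 0 < x) => ?_) measurableSet_Ioi
  rcases le_or_gt 1 x with hx1 | hx1
  · exact (hχ1 x hx1).symm
  · rw [hχ2 x hx hx1, intervalIntegral.integral_symm]
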